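/- arXiv:1608.02445 — 2 statements merged into one kernel-verified Lean document; each statement's English description precedes it below -/
import Mathlib

section
/- Let G be a finite group acting by *-automorphisms α on a C*-algebra A. If the action is ergodic, i.e. the fixed-point algebra A^G = {x ∈ A : α_g(x) = x for all g ∈ G} equals ℂ·1, then A is finite dimensional with dim A ≤ |G|. -/
theorem rank_le_of_orthonormal_aux {V : Type*} [AddCommGroup V] [Module ℂ V]
    (c : InnerProductSpace.Core ℂ V) (N : ℕ)
    (h : ∀ (n : ℕ) (f : Fin n → V),
      (∀ i j, c.inner (f i) (f j) = if i = j then 1 else 0) → n ≤ N) :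
    Module.rank ℂ V ≤ N := by
  let : NormedAddCommGroup V := c.toNormedAddCommGroup
  let : InnerProductSpace ℂ V := InnerProductSpace.ofCore c.toCore
  apply rank_le
  intro s hs
  have hs' : LinearIndependent ℂ (fun i : Fin s.card => ((s.equivFin.symm i : s) : V)) :=
    hs.comp _ s.equivFin.symm.injective
  have ho := InnerProductSpace.gramSchmidtNormed_orthonormal hs'
  rw [orthonormal_iff_ite] at ho
  exact h _ _ ho

theorem ergodic_aux (A : Type*) [CStarAlgebra A] [Nontrivial A] [PartialOrder A]
    [StarOrderedRing A]
    (G : Type*) [Group G] [Fintype G]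
    (α : G → A ≃⋆ₐ[ℂ] A) (hα : ∀ (g h : G) (x : A), α (g * h) x = α g (α h x))
    (hergodic : ∀ x : A, (∀ g : G, α g x = x) → ∃ c : ℂ, x = c • (1 : A)) :
    FiniteDimensional ℂ A ∧ Module.finrank ℂ A ≤ Nat.card G := by
  have h1 : ∀ x, α 1 x = x := fun x => by
    apply EquivLike.injective (α 1)
    rw [← hα, one_mul]
  have hex : ∀ x : A, ∃ c : ℂ, ∑ g, α g x = c • (1 : A) := fun x => by
    apply hergodic
    intro h
    rw [map_sum]
    simp_rw [← hα]
    exact Fintype.sum_equiv (Equiv.mulLeft h) _ _ (fun g => rfl)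
  choose t ht using hex
  have hinj : ∀ a b : ℂ, a • (1 : A) = b • (1 : A) → a = b := fun a b hab =>
    smul_left_injective ℂ (one_ne_zero (α := A)) hab
  let τ : A →ₗ[ℂ] ℂ :=
    { toFun := t
      map_add' := fun x y => by
        apply hinj
        rw [add_smul, ← ht, ← ht, ← ht, ← Finset.sum_add_distrib]
        simp
      map_smul' := fun c x => by
        apply hinj
        rw [RingHom.id_apply, smul_assoc, ← ht, ← ht, Finset.smul_sum]
        simp }
  have hτ : ∀ x : A, ∑ g, α g x = τ x • (1 : A) := ht
  clear_value τ
  have hstar : ∀ x, τ (star x) = star (τ x) := fun x => by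
    apply hinj
    rw [← hτ]
    have := congrArg star (hτ x)
    rw [star_sum, star_smul, star_one] at this
    rw [← this]
    simp [map_star]
  have hpos : ∀ g (x : A), 0 ≤ α g (star x * x) := fun g x => by
    rw [map_mul, map_star]; exact star_mul_self_nonneg _
  have hle : ∀ x, star x * x ≤ τ (star x * x) • (1 : A) := fun x => by
    rw [← hτ]
    calc star x * x = α 1 (star x * x) := (h1 _).symm
      _ ≤ _ := Finset.single_le_sum (f := fun g => α g (star x * x)) (fun g _ => hpos g x) (Finset.mem_univ 1)
  have hnn : ∀ x, ∃ r : ℝ, 0 ≤ r ∧ τ (star x * x) = r := fun x => by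
    have e : star (τ (star x * x)) = τ (star x * x) := by rw [← hstar]; simp
    have e' : τ (star x * x) = ((τ (star x * x)).re : ℂ) := (Complex.conj_eq_iff_re.mp e).symm
    refine ⟨_, ?_, e'⟩
    have hh := (star_mul_self_nonneg x).trans (hle x)
    rw [e'] at hh
    refine spectrum_nonneg_of_nonneg hh ?_
    have : ((((τ (star x * x)).re : ℝ) : ℂ) • (1 : A)) = algebraMap ℝ A (τ (star x * x)).re := by
      rw [Algebra.algebraMap_eq_smul_one, Complex.coe_smul]
    rw [this, spectrum.scalar_eq]
    exact Set.mem_singleton _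
  have hnorm : ∀ x, ‖x‖ ^ 2 ≤ (τ (star x * x)).re := fun x => by
    obtain ⟨r, hr, e⟩ := hnn x
    have := CStarAlgebra.norm_le_norm_of_nonneg_of_le (star_mul_self_nonneg x) (hle x)
    rw [CStarRing.norm_star_mul_self, norm_smul, norm_one, mul_one, e, Complex.norm_real,
      Real.norm_of_nonneg hr] at this
    rw [e, Complex.ofReal_re, sq]; exact this
  have hbd : ∀ x, ‖τ x‖ ≤ Fintype.card G * ‖x‖ := fun x => by
    have := congrArg norm (hτ x)
    rw [norm_smul, norm_one, mul_one] at this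
    rw [← this]
    refine (norm_sum_le _ _).trans ?_
    refine (Finset.sum_le_card_nsmul _ _ ‖x‖ (fun g _ => ?_)).trans ?_
    · exact NonUnitalStarAlgHom.norm_apply_le (α g) x
    · simp
  let c : InnerProductSpace.Core ℂ A :=
    { inner := fun x y => τ (star x * y)
      conj_inner_symm := fun x y => by
        change star (τ (star y * x)) = _
        rw [← hstar]; simp
      re_inner_nonneg := fun x => by
        obtain ⟨r, hr, e⟩ := hnn x
        rw [e]; simpa using hr
      add_left := fun x y z => by simp [add_mul]
      smul_left := fun x y r => by simp
      definite := fun x hx => by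
        have := hnorm x
        rw [hx] at this
        simpa using le_antisymm this (sq_nonneg _) }
  have key : ∀ (n : ℕ) (f : Fin n → A),
      (∀ i j, c.inner (f i) (f j) = if i = j then 1 else 0) → ∀ (a : Fin n → A) (k : Fin n),
      ∑ g, star (α g (f k)) * ∑ i, α g (f i) * a i = a k := by
    intro n f hf a k
    simp_rw [Finset.mul_sum, ← mul_assoc, ← map_star, ← map_mul]
    rw [Finset.sum_comm]
    simp_rw [← Finset.sum_mul, hτ]
    have hf' : ∀ i j, τ (star (f i) * f j) = if i = j then 1 else 0 := hf
    simp [hf']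
  have hfin : Module.rank ℂ A ≤ (Fintype.card G ^ 2 : ℕ) := by
    refine rank_le_of_orthonormal_aux c _ fun n f hf => ?_
    have hk := key n f hf (fun i => star (f i))
    have hf' : ∀ i j, τ (star (f i) * f j) = if i = j then 1 else 0 := hf
    set y := ∑ i, f i * star (f i) with hy
    have hsum : ∑ g, star (∑ i, α g (f i) * star (f i)) * (∑ i, α g (f i) * star (f i)) = y := by
      simp_rw [star_sum, star_mul, star_star]
      simp_rw [Finset.sum_mul, mul_assoc]
      rw [Finset.sum_comm]
      simp_rw [← Finset.mul_sum, hk]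
      rfl
    have hyy : star y * y ≤ y := by
      nth_rewrite 3 [← hsum]
      have := Finset.single_le_sum (f := fun g => star (∑ i, α g (f i) * star (f i)) *
        (∑ i, α g (f i) * star (f i))) (fun g _ => star_mul_self_nonneg _) (Finset.mem_univ 1)
      simpa only [h1] using this
    have hy1 : ‖y‖ ≤ 1 := by
      have := CStarAlgebra.norm_le_norm_of_nonneg_of_le (star_mul_self_nonneg y) hyy
      rw [CStarRing.norm_star_mul_self] at this
      by_contra hc
      push Not at hc
      nlinarith
    have hG : (0 : ℝ) < Fintype.card G := by exact_mod_cast Fintype.card_pos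
    have hlow : ∀ i, 1 / (Fintype.card G : ℝ) ≤ (τ (f i * star (f i))).re := fun i => by
      have a1 := hnorm (star (f i))
      rw [star_star, norm_star] at a1
      have a2 := hbd (star (f i) * f i)
      rw [hf', if_pos rfl, CStarRing.norm_star_mul_self, norm_one] at a2
      rw [div_le_iff₀ hG]
      nlinarith
    have hup : (τ y).re ≤ Fintype.card G := by
      refine (Complex.re_le_norm _).trans ((hbd y).trans ?_)
      nlinarith
    have hlo : (n : ℝ) * (1 / (Fintype.card G : ℝ)) ≤ (τ y).re := by
      rw [hy, map_sum, Complex.re_sum]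
      have := Finset.card_nsmul_le_sum Finset.univ _ _ (fun i _ => hlow i)
      simpa using this
    have := hlo.trans hup
    rw [mul_one_div, div_le_iff₀ hG] at this
    rw [sq]
    exact_mod_cast this
  have hfd : FiniteDimensional ℂ A :=
    Module.rank_lt_aleph0_iff.mp (hfin.trans_lt (Cardinal.natCast_lt_aleph0))
  refine ⟨hfd, ?_⟩
  rw [Nat.card_eq_fintype_card]
  refine Module.finrank_le_of_rank_le (rank_le_of_orthonormal_aux c _ fun n f hf => ?_)
  let L : (Fin n → A) →ₗ[ℂ] (G → A) :=
    { toFun := fun a g => ∑ i, α g (f i) * a i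
      map_add' := fun a b => by
        ext g; simp [mul_add, Finset.sum_add_distrib]
      map_smul' := fun r a => by
        ext g; simp [Finset.smul_sum] }
  have hL : Function.Injective L := by
    intro a b hab
    ext k
    rw [← key n f hf a k, ← key n f hf b k]
    exact Finset.sum_congr rfl fun g _ => congrArg _ (congrFun hab g)
  have := LinearMap.finrank_le_finrank_of_injective hL
  simp only [Module.finrank_pi_fintype, Finset.sum_const, Finset.card_univ, Fintype.card_fin,
    smul_eq_mul] at this
  exact Nat.le_of_mul_le_mul_right this Module.finrank_pos

/-- If a finite group `G` acts by *-automorphisms on a C*-algebra `A` and the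
action is ergodic (the fixed-point algebra is `ℂ·1`), then `A` is finite dimensional with
`dim A ≤ |G|`. -/
theorem ergodic_action_finite_dimensional (A : Type*) [NormedRing A] [StarRing A]
    [CStarRing A] [NormedAlgebra ℂ A] [CompleteSpace A] [StarModule ℂ A]
    (G : Type*) [Group G] [Finite G]
    (α : G → A ≃⋆ₐ[ℂ] A) (hα : ∀ (g h : G) (x : A), α (g * h) x = α g (α h x))
    (hergodic : ∀ x : A, (∀ g : G, α g x = x) → ∃ c : ℂ, x = c • (1 : A)) :
    FiniteDimensional ℂ A ∧ Module.finrank ℂ A ≤ Nat.card G := by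
  rcases subsingleton_or_nontrivial A with hA | hA
  · refine ⟨inferInstance, ?_⟩
    rw [Module.finrank_zero_of_subsingleton]
    exact Nat.zero_le _
  · let : CStarAlgebra A := {}
    let := CStarAlgebra.spectralOrder A
    have := CStarAlgebra.spectralOrderedRing A
    have := Fintype.ofFinite G
    exact ergodic_aux A G α hα hergodic
end

section
/- Let (π, U) be a covariant representation of (A, G, α) on H with G finite. If (π, U) is irreducible (i.e. (π(A) ∪ U_G)' = ℂ·1), then the conjugation action of G on π(A)' is ergodic and dim π(A)' ≤ |G|. -/
open scoped InnerProductSpace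

section ErgodicBound

variable {H : Type*} [NormedAddCommGroup H] [InnerProductSpace ℂ H] [CompleteSpace H]
  {G : Type*} [Group G] [Fintype G]

/-- The evaluation map `T ↦ (T U_g^* ξ)_g`. -/
noncomputable def ergJ (U : G →* unitary (H →L[ℂ] H)) (ξ : H) :
    (H →L[ℂ] H) →ₗ[ℂ] PiLp 2 (fun _ : G => H) where
  toFun T := WithLp.toLp 2 (fun g => T ((star (U g : H →L[ℂ] H)) ξ))
  map_add' S T := by ext g; simp
  map_smul' c T := by ext g; simp

theorem ergJ_apply (U : G →* unitary (H →L[ℂ] H)) (ξ : H) (T : H →L[ℂ] H) (g : G) :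
    ergJ U ξ T g = T ((star (U g : H →L[ℂ] H)) ξ) := rfl

theorem erg_inner_star (T : H →L[ℂ] H) (x y : H) :
    ⟪(star T) x, y⟫_ℂ = ⟪x, T y⟫_ℂ := by
  rw [ContinuousLinearMap.star_eq_adjoint, ContinuousLinearMap.adjoint_inner_left]

theorem erg_inner_star' (T : H →L[ℂ] H) (x y : H) :
    ⟪T x, y⟫_ℂ = ⟪x, (star T) y⟫_ℂ := by
  rw [ContinuousLinearMap.star_eq_adjoint, ContinuousLinearMap.adjoint_inner_right]

theorem erg_inner_J (U : G →* unitary (H →L[ℂ] H)) (ξ : H) (S T : H →L[ℂ] H) :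
    ⟪ergJ U ξ S, ergJ U ξ T⟫_ℂ =
      ⟪ξ, (∑ g, (U g : H →L[ℂ] H) * (star S * T) * star (U g : H →L[ℂ] H)) ξ⟫_ℂ := by
  rw [PiLp.inner_apply, ContinuousLinearMap.sum_apply, inner_sum]
  refine Finset.sum_congr rfl fun g _ => ?_
  rw [ergJ_apply, ergJ_apply, erg_inner_star', erg_inner_star]
  rfl

/-- the average is a scalar, computed by the inner product -/
theorem erg_avg (U : G →* unitary (H →L[ℂ] H)) (M : Subalgebra ℂ (H →L[ℂ] H))
    (hstar : ∀ T ∈ M, star T ∈ M)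
    (hconj : ∀ g, ∀ T ∈ M, (U g : H →L[ℂ] H) * T * star (U g : H →L[ℂ] H) ∈ M)
    (herg : ∀ T ∈ M, (∀ g, (U g : H →L[ℂ] H) * T * star (U g : H →L[ℂ] H) = T) →
      ∃ c : ℂ, T = c • (1 : H →L[ℂ] H))
    (ξ : H) (hξ : ‖ξ‖ = 1) (S T : H →L[ℂ] H) (hS : S ∈ M) (hT : T ∈ M) :
    (∑ g, (U g : H →L[ℂ] H) * (star S * T) * star (U g : H →L[ℂ] H)) =
      ⟪ergJ U ξ S, ergJ U ξ T⟫_ℂ • (1 : H →L[ℂ] H) := by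
  obtain ⟨c, hc⟩ := herg
    (∑ g, (U g : H →L[ℂ] H) * (star S * T) * star (U g : H →L[ℂ] H))
    (M.sum_mem fun g _ => hconj g _ (M.mul_mem (hstar _ hS) hT)) (by
      intro h
      rw [Finset.mul_sum, Finset.sum_mul]
      refine Fintype.sum_equiv (Equiv.mulLeft h) _ _ fun g => ?_
      simp only [Equiv.coe_mulLeft, map_mul, Submonoid.coe_mul, star_mul, mul_assoc])
  rw [erg_inner_J, hc]
  congr 1
  simp [inner_smul_right, inner_self_eq_norm_sq_to_K, hξ]

theorem erg_norm_sum_le (U : G →* unitary (H →L[ℂ] H)) (M : Subalgebra ℂ (H →L[ℂ] H))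
    (hstar : ∀ T ∈ M, star T ∈ M)
    (hconj : ∀ g, ∀ T ∈ M, (U g : H →L[ℂ] H) * T * star (U g : H →L[ℂ] H) ∈ M)
    (herg : ∀ T ∈ M, (∀ g, (U g : H →L[ℂ] H) * T * star (U g : H →L[ℂ] H) = T) →
      ∃ c : ℂ, T = c • (1 : H →L[ℂ] H))
    (ξ : H) (hξ : ‖ξ‖ = 1) {ι : Type*} [Fintype ι] [DecidableEq ι] (e : ι → (H →L[ℂ] H))
    (he : ∀ i, e i ∈ M) (r : ℝ)
    (ho : ∀ i j, ⟪ergJ U ξ (e i), ergJ U ξ (e j)⟫_ℂ = if i = j then (r : ℂ) else 0)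
    (η : ι → H) : ‖∑ i, e i (η i)‖ ^ 2 ≤ r * ∑ i, ‖η i‖ ^ 2 := by
  have key : ∑ g, ‖∑ i, e i ((star (U g : H →L[ℂ] H)) (η i))‖ ^ 2 = r * ∑ i, ‖η i‖ ^ 2 := by
    have : ((∑ g, ‖∑ i, e i ((star (U g : H →L[ℂ] H)) (η i))‖ ^ 2 : ℝ) : ℂ)
        = ((r * ∑ i, ‖η i‖ ^ 2 : ℝ) : ℂ) := by
      push_cast
      calc _ = ∑ g, ∑ i, ∑ j, ⟪η i, ((U g : H →L[ℂ] H) * (star (e i) * e j) *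
                star (U g : H →L[ℂ] H)) (η j)⟫_ℂ := by
            refine Finset.sum_congr rfl fun g _ => ?_
            refine (inner_self_eq_norm_sq_to_K (𝕜 := ℂ)
              (∑ i, e i ((star (U g : H →L[ℂ] H)) (η i)))).symm.trans ?_
            rw [sum_inner]
            refine Finset.sum_congr rfl fun i _ => ?_
            rw [inner_sum]
            refine Finset.sum_congr rfl fun j _ => ?_
            rw [erg_inner_star', erg_inner_star]
            rfl
        _ = ∑ i, ∑ j, ⟪η i, (∑ g, (U g : H →L[ℂ] H) * (star (e i) * e j) *
                star (U g : H →L[ℂ] H)) (η j)⟫_ℂ := by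
            rw [Finset.sum_comm]
            refine Finset.sum_congr rfl fun i _ => ?_
            rw [Finset.sum_comm]
            refine Finset.sum_congr rfl fun j _ => ?_
            rw [ContinuousLinearMap.sum_apply, inner_sum]
        _ = _ := by
            rw [Finset.mul_sum]
            refine Finset.sum_congr rfl fun i _ => ?_
            rw [Finset.sum_eq_single i]
            · rw [erg_avg U M hstar hconj herg ξ hξ _ _ (he i) (he i), ho]
              simp [inner_smul_right, inner_self_eq_norm_sq_to_K]
            · intro j _ hj
              rw [erg_avg U M hstar hconj herg ξ hξ _ _ (he i) (he j), ho]
              simp [hj.symm]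
            · simp
    exact_mod_cast this
  rw [← key]
  have := Finset.single_le_sum
    (f := fun g => ‖∑ i, e i ((star (U g : H →L[ℂ] H)) (η i))‖ ^ 2)
    (fun g _ => by positivity) (Finset.mem_univ (1 : G))
  simpa using this

theorem erg_J_inj (U : G →* unitary (H →L[ℂ] H)) (M : Subalgebra ℂ (H →L[ℂ] H))
    (hstar : ∀ T ∈ M, star T ∈ M)
    (hconj : ∀ g, ∀ T ∈ M, (U g : H →L[ℂ] H) * T * star (U g : H →L[ℂ] H) ∈ M)
    (herg : ∀ T ∈ M, (∀ g, (U g : H →L[ℂ] H) * T * star (U g : H →L[ℂ] H) = T) →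
      ∃ c : ℂ, T = c • (1 : H →L[ℂ] H))
    (ξ : H) (hξ : ‖ξ‖ = 1) (T : H →L[ℂ] H) (hT : T ∈ M) (h0 : ergJ U ξ T = 0) : T = 0 := by
  ext η
  have := erg_norm_sum_le U M hstar hconj herg ξ hξ (ι := Unit) (fun _ => T) (fun _ => hT) 0
    (by simp [h0]) (fun _ => η)
  simp at this
  simpa using this

theorem erg_sum_star_le (U : G →* unitary (H →L[ℂ] H)) (M : Subalgebra ℂ (H →L[ℂ] H))
    (hstar : ∀ T ∈ M, star T ∈ M)
    (hconj : ∀ g, ∀ T ∈ M, (U g : H →L[ℂ] H) * T * star (U g : H →L[ℂ] H) ∈ M)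
    (herg : ∀ T ∈ M, (∀ g, (U g : H →L[ℂ] H) * T * star (U g : H →L[ℂ] H) = T) →
      ∃ c : ℂ, T = c • (1 : H →L[ℂ] H))
    (ξ : H) (hξ : ‖ξ‖ = 1) {ι : Type*} [Fintype ι] [DecidableEq ι] (e : ι → (H →L[ℂ] H))
    (he : ∀ i, e i ∈ M)
    (ho : ∀ i j, ⟪ergJ U ξ (e i), ergJ U ξ (e j)⟫_ℂ = if i = j then 1 else 0)
    (η : H) : ∑ i, ‖(star (e i)) η‖ ^ 2 ≤ ‖η‖ ^ 2 := by
  have h1 := erg_norm_sum_le U M hstar hconj herg ξ hξ e he 1 (by simpa using ho)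
    (fun i => (star (e i)) η)
  rw [one_mul] at h1
  have h2 : ((∑ i, ‖(star (e i)) η‖ ^ 2 : ℝ) : ℂ) = ⟪η, ∑ i, e i ((star (e i)) η)⟫_ℂ := by
    rw [inner_sum]
    push_cast
    refine Finset.sum_congr rfl fun i _ => ?_
    rw [← erg_inner_star]
    exact (inner_self_eq_norm_sq_to_K (𝕜 := ℂ) ((star (e i)) η)).symm
  have h3 : ∑ i, ‖(star (e i)) η‖ ^ 2 ≤ ‖η‖ * ‖∑ i, e i ((star (e i)) η)‖ := by
    refine le_trans ?_ (norm_inner_le_norm (𝕜 := ℂ) η _)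
    rw [← h2, Complex.norm_real]
    exact le_abs_self _
  nlinarith [sq_nonneg (‖η‖ - ‖∑ i, e i ((star (e i)) η)‖)]

theorem erg_card_le (U : G →* unitary (H →L[ℂ] H)) (M : Subalgebra ℂ (H →L[ℂ] H))
    (hstar : ∀ T ∈ M, star T ∈ M)
    (hconj : ∀ g, ∀ T ∈ M, (U g : H →L[ℂ] H) * T * star (U g : H →L[ℂ] H) ∈ M)
    (herg : ∀ T ∈ M, (∀ g, (U g : H →L[ℂ] H) * T * star (U g : H →L[ℂ] H) = T) →
      ∃ c : ℂ, T = c • (1 : H →L[ℂ] H))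
    (ξ : H) (hξ : ‖ξ‖ = 1) {ι : Type*} [Fintype ι] [DecidableEq ι] (e : ι → (H →L[ℂ] H))
    (he : ∀ i, e i ∈ M)
    (ho : ∀ i j, ⟪ergJ U ξ (e i), ergJ U ξ (e j)⟫_ℂ = if i = j then 1 else 0)
    (C : ι → ι → ℂ) (hC : ∀ i, star (e i) = ∑ j, C i j • e j) :
    Fintype.card ι ≤ Fintype.card G := by
  have h1 : ∑ i, ‖ergJ U ξ (star (e i))‖ ^ 2 ≤ Fintype.card G := by
    simp_rw [PiLp.norm_sq_eq_of_L2, ergJ_apply]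
    rw [Finset.sum_comm]
    calc _ ≤ ∑ g : G, ‖(star (U g : H →L[ℂ] H)) ξ‖ ^ 2 :=
          Finset.sum_le_sum fun g _ =>
            erg_sum_star_le U M hstar hconj herg ξ hξ e he ho _
      _ = ∑ g : G, (1 : ℝ) := by
          refine Finset.sum_congr rfl fun g _ => ?_
          have : ((‖(star (U g : H →L[ℂ] H)) ξ‖ ^ 2 : ℝ) : ℂ) = ((1 : ℝ) : ℂ) := by
            push_cast
            have h := inner_self_eq_norm_sq_to_K (𝕜 := ℂ) ((star (U g : H →L[ℂ] H)) ξ)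
            refine h.symm.trans ?_
            rw [erg_inner_star, ← ContinuousLinearMap.mul_apply,
              Unitary.mul_star_self_of_mem (U g).2]
            simp [inner_self_eq_norm_sq_to_K, hξ]
          exact_mod_cast this
      _ = _ := by simp
  have h2 : ∀ i, ‖ergJ U ξ (star (e i))‖ ^ 2 = ∑ j, ‖C i j‖ ^ 2 := by
    intro i
    have : ((‖ergJ U ξ (star (e i))‖ ^ 2 : ℝ) : ℂ) = ((∑ j, ‖C i j‖ ^ 2 : ℝ) : ℂ) := by
      push_cast
      refine (inner_self_eq_norm_sq_to_K (𝕜 := ℂ) (ergJ U ξ (star (e i)))).symm.trans ?_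
      rw [hC, map_sum]
      simp only [map_smul, sum_inner, inner_sum, inner_smul_left, inner_smul_right, ho]
      simp [Complex.conj_mul', Complex.mul_conj']
    exact_mod_cast this
  have h3 : ∀ i, ∑ j, (starRingEnd ℂ) (C i j) * C j i = 1 := by
    intro i
    have h := congrArg star (hC i)
    rw [star_star, star_sum] at h
    have h' : ⟪ergJ U ξ (e i), ergJ U ξ (e i)⟫_ℂ = 1 := by rw [ho, if_pos rfl]
    conv_lhs at h' => arg 3; rw [h]
    simp only [star_smul, hC, map_sum, map_smul, inner_sum, inner_smul_right, ho] at h'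
    simpa using h'
  have h4 : (Fintype.card ι : ℝ) ≤ ∑ i, ∑ j, ‖C i j‖ ^ 2 := by
    have a : (Fintype.card ι : ℂ) = ∑ i, ∑ j, (starRingEnd ℂ) (C i j) * C j i := by
      simp [h3]
    have b : (Fintype.card ι : ℝ) ≤ ∑ i, ∑ j, ‖C i j‖ * ‖C j i‖ := by
      have := congrArg norm a
      rw [Complex.norm_natCast] at this
      rw [this]
      refine (norm_sum_le _ _).trans (Finset.sum_le_sum fun i _ => ?_)
      refine (norm_sum_le _ _).trans (Finset.sum_le_sum fun j _ => ?_)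
      simp
    have c : ∑ i, ∑ j, ‖C i j‖ * ‖C j i‖ ≤ ∑ i, ∑ j, (‖C i j‖ ^ 2 + ‖C j i‖ ^ 2) / 2 := by
      refine Finset.sum_le_sum fun i _ => Finset.sum_le_sum fun j _ => ?_
      nlinarith [sq_nonneg (‖C i j‖ - ‖C j i‖)]
    have d : ∑ i, ∑ j, ‖C j i‖ ^ 2 = ∑ i, ∑ j, ‖C i j‖ ^ 2 := Finset.sum_comm
    simp only [← Finset.sum_div, Finset.sum_add_distrib] at c
    linarith
  simp_rw [h2] at h1
  exact_mod_cast h4.trans h1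

theorem erg_finrank_le (U : G →* unitary (H →L[ℂ] H)) (M : Subalgebra ℂ (H →L[ℂ] H))
    (hstar : ∀ T ∈ M, star T ∈ M)
    (hconj : ∀ g, ∀ T ∈ M, (U g : H →L[ℂ] H) * T * star (U g : H →L[ℂ] H) ∈ M)
    (herg : ∀ T ∈ M, (∀ g, (U g : H →L[ℂ] H) * T * star (U g : H →L[ℂ] H) = T) →
      ∃ c : ℂ, T = c • (1 : H →L[ℂ] H))
    (ξ : H) (hξ : ‖ξ‖ = 1) (V : Submodule ℂ (H →L[ℂ] H)) [FiniteDimensional ℂ V]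
    (hVM : ∀ T ∈ V, T ∈ M) (hVs : ∀ T ∈ V, star T ∈ V) :
    Module.finrank ℂ V ≤ Fintype.card G := by
  have hinj : Function.Injective ((ergJ U ξ).domRestrict V) := by
    rw [← LinearMap.ker_eq_bot, LinearMap.ker_eq_bot']
    intro T hT
    exact Subtype.ext (erg_J_inj U M hstar hconj herg ξ hξ T (hVM _ T.2) hT)
  let W := LinearMap.range ((ergJ U ξ).domRestrict V)
  have hW : Module.finrank ℂ W = Module.finrank ℂ V := LinearMap.finrank_range_of_inj hinj
  let b := stdOrthonormalBasis ℂ W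
  have hb : ∀ i, ∃ T : V, ergJ U ξ T = b i := fun i => (b i).2
  choose e he using hb
  have ho : ∀ i j, ⟪ergJ U ξ (e i), ergJ U ξ (e j)⟫_ℂ = if i = j then 1 else 0 := by
    intro i j
    rw [he, he]
    exact orthonormal_iff_ite.mp b.orthonormal i j
  have hx : ∀ T : V, ∃ c : Fin (Module.finrank ℂ W) → ℂ,
      (T : H →L[ℂ] H) = ∑ j, c j • (e j : H →L[ℂ] H) := by
    intro T
    let w : W := ⟨ergJ U ξ T, ⟨T, rfl⟩⟩
    refine ⟨fun j => ⟪b j, w⟫_ℂ, ?_⟩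
    have h := congrArg Subtype.val (b.sum_repr' w)
    have : T = ∑ j, ⟪b j, w⟫_ℂ • e j := by
      apply hinj
      rw [map_sum]
      simp only [map_smul, LinearMap.domRestrict_apply, he]
      simpa [w] using h.symm
    simpa using congrArg Subtype.val this
  choose C hC using fun i => hx ⟨star (e i : H →L[ℂ] H), hVs _ (e i).2⟩
  have := erg_card_le U M hstar hconj herg ξ hξ (fun i => (e i : H →L[ℂ] H))
    (fun i => hVM _ (e i).2) ho C hC
  rwa [Fintype.card_fin, hW] at this

theorem erg_rank_le (U : G →* unitary (H →L[ℂ] H)) (M : Subalgebra ℂ (H →L[ℂ] H))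
    (hstar : ∀ T ∈ M, star T ∈ M)
    (hconj : ∀ g, ∀ T ∈ M, (U g : H →L[ℂ] H) * T * star (U g : H →L[ℂ] H) ∈ M)
    (herg : ∀ T ∈ M, (∀ g, (U g : H →L[ℂ] H) * T * star (U g : H →L[ℂ] H) = T) →
      ∃ c : ℂ, T = c • (1 : H →L[ℂ] H))
    (ξ : H) (hξ : ‖ξ‖ = 1) : Module.rank ℂ M ≤ Fintype.card G := by
  refine rank_le fun s hs => ?_
  let t : Set (H →L[ℂ] H) := Set.range (fun x : s => ((x : M) : H →L[ℂ] H))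
  have htf : t.Finite := Set.finite_range _
  have htM : ∀ x ∈ t, x ∈ M := by
    rintro _ ⟨x, rfl⟩
    exact (x : M).2
  let V : Submodule ℂ (H →L[ℂ] H) := Submodule.span ℂ (t ∪ star '' t)
  have : FiniteDimensional ℂ V :=
    FiniteDimensional.span_of_finite ℂ (htf.union (htf.image _))
  have hVM : ∀ T ∈ V, T ∈ M := by
    have : V ≤ Subalgebra.toSubmodule M := by
      refine Submodule.span_le.mpr ?_
      rintro x (hx | ⟨y, hy, rfl⟩)
      · exact htM x hx
      · exact hstar _ (htM y hy)
    exact fun T hT => this hT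
  have hVs : ∀ T ∈ V, star T ∈ V := by
    intro T hT
    induction hT using Submodule.span_induction with
    | mem x hx =>
      rcases hx with hx | ⟨y, hy, rfl⟩
      · exact Submodule.subset_span (Or.inr ⟨x, hx, rfl⟩)
      · rw [star_star]; exact Submodule.subset_span (Or.inl hy)
    | zero => simp
    | add x y _ _ hx hy => rw [star_add]; exact V.add_mem hx hy
    | smul a x _ hx => rw [star_smul]; exact V.smul_mem _ hx
  have hle := erg_finrank_le U M hstar hconj herg ξ hξ V hVM hVs
  let f : s → V := fun x => ⟨((x : M) : H →L[ℂ] H), Submodule.subset_span (Or.inl ⟨x, rfl⟩)⟩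
  have hf : LinearIndependent ℂ f := by
    apply LinearIndependent.of_comp V.subtype
    exact hs.map' M.val.toLinearMap (LinearMap.ker_eq_bot.mpr Subtype.val_injective)
  have := hf.fintype_card_le_finrank
  rw [Fintype.card_coe] at this
  exact this.trans hle

end ErgodicBound


/-- If a covariant representation `(π, U)` of `(A, G, α)` with `G` finite is
irreducible, then the conjugation action of `G` on the commutant `π(A)'` is ergodic and
`dim π(A)' ≤ |G|`. -/
theorem irreducible_covariant_rep_commutant_small
    (A : Type*) [NormedRing A] [StarRing A] [CStarRing A] [NormedAlgebra ℂ A]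
    [CompleteSpace A] [StarModule ℂ A]
    (H : Type*) [NormedAddCommGroup H] [InnerProductSpace ℂ H] [CompleteSpace H]
    (G : Type*) [Group G] [Finite G]
    (α : G → A ≃⋆ₐ[ℂ] A) (hα : ∀ (g h : G) (x : A), α (g * h) x = α g (α h x))
    (π : A →⋆ₐ[ℂ] (H →L[ℂ] H)) (U : G →* unitary (H →L[ℂ] H))
    (hcov : ∀ (g : G) (x : A),
      π (α g x) = (U g : H →L[ℂ] H) * π x * star (U g : H →L[ℂ] H))
    (hirr : ∀ T : H →L[ℂ] H,
      T ∈ Set.centralizer (Set.range (⇑π) ∪ Set.range (fun g => (U g : H →L[ℂ] H))) →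
      ∃ c : ℂ, T = c • (1 : H →L[ℂ] H)) :
    (∀ T : H →L[ℂ] H, T ∈ Set.centralizer (Set.range (⇑π)) →
      (∀ g : G, (U g : H →L[ℂ] H) * T * star (U g : H →L[ℂ] H) = T) →
      ∃ c : ℂ, T = c • (1 : H →L[ℂ] H)) ∧
    FiniteDimensional ℂ (Subalgebra.centralizer ℂ (Set.range (⇑π))) ∧
    Module.finrank ℂ (Subalgebra.centralizer ℂ (Set.range (⇑π))) ≤ Nat.card G := by

  have hmem : ∀ T : H →L[ℂ] H, T ∈ Subalgebra.centralizer ℂ (Set.range (⇑π)) ↔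
      ∀ x, π x * T = T * π x := by
    intro T
    rw [Subalgebra.mem_centralizer_iff]
    simp
  have huu : ∀ g, star (U g : H →L[ℂ] H) * (U g : H →L[ℂ] H) = 1 := fun g =>
    Unitary.star_mul_self_of_mem (U g).2
  have herg : ∀ T : H →L[ℂ] H, T ∈ Set.centralizer (Set.range (⇑π)) →
      (∀ g : G, (U g : H →L[ℂ] H) * T * star (U g : H →L[ℂ] H) = T) →
      ∃ c : ℂ, T = c • (1 : H →L[ℂ] H) := by
    intro T hT hg
    apply hirr
    rintro x (hx | ⟨g, rfl⟩)
    · exact hT x hx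
    · change (U g : H →L[ℂ] H) * T = T * (U g : H →L[ℂ] H)
      conv_rhs => rw [← hg g, mul_assoc, huu, mul_one]
  refine ⟨herg, ?_⟩
  have := Fintype.ofFinite G
  rcases subsingleton_or_nontrivial H with hH | hH
  · have : Subsingleton (H →L[ℂ] H) := ⟨fun S T => by ext x; exact Subsingleton.elim _ _⟩
    refine ⟨inferInstance, ?_⟩
    rw [Module.finrank_zero_of_subsingleton]
    exact Nat.zero_le _
  · obtain ⟨ξ, hξ⟩ := exists_norm_eq H zero_le_one
    have hr := erg_rank_le U (Subalgebra.centralizer ℂ (Set.range (⇑π)))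
      (by
        intro T hT
        rw [hmem] at hT ⊢
        intro x
        have := congrArg star (hT (star x))
        simpa [map_star] using this.symm)
      (by
        intro g T hT
        rw [hmem] at hT ⊢
        intro x
        have h := hcov g ((α g).symm x)
        rw [StarAlgEquiv.apply_symm_apply] at h
        rw [h]
        generalize (α g).symm x = y
        calc _ = (U g : H →L[ℂ] H) * π y * (star (U g : H →L[ℂ] H) * (U g : H →L[ℂ] H)) * T *
              star (U g : H →L[ℂ] H) := by simp only [mul_assoc]
          _ = (U g : H →L[ℂ] H) * (π y * T) * star (U g : H →L[ℂ] H) := by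
              rw [huu]; simp only [mul_assoc, one_mul]
          _ = (U g : H →L[ℂ] H) * T * (star (U g : H →L[ℂ] H) * (U g : H →L[ℂ] H)) * π y *
              star (U g : H →L[ℂ] H) := by
              rw [huu, hT]; simp only [mul_assoc, one_mul]
          _ = _ := by simp only [mul_assoc])
      (fun T hT hg => herg T hT hg) ξ hξ
    have hfd : FiniteDimensional ℂ (Subalgebra.centralizer ℂ (Set.range (⇑π))) :=
      Module.rank_lt_aleph0_iff.mp (hr.trans_lt Cardinal.natCast_lt_aleph0)
    refine ⟨hfd, ?_⟩
    rw [Nat.card_eq_fintype_card]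
    exact Module.finrank_le_of_rank_le hr
end
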